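/- Let q be a non-constant symmetric real polynomial in two variables with q(x,y) ∈ [0,1] for all (x,y) ∈ [0,1]², and let W ∈ 𝒲₀ be defined by W(x,y) = q(x,y). Then W is not finitely forcible in 𝒲. -/

import Mathlib

open MeasureTheory
open scoped Classical

noncomputable section

/-- The unit interval `[0,1]` as a subset of `ℝ`. -/
def I01 : Set ℝ := Set.Icc 0 1

/-- The cube `[0,1]^n`. -/
def cube (n : ℕ) : Set (Fin n → ℝ) := Set.univ.pi fun _ => I01

/-- `W` belongs to `𝒲`: a bounded symmetric measurable function on `[0,1]²`. -/
def memW (W : ℝ → ℝ → ℝ) : Prop :=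
  Measurable (Function.uncurry W) ∧
  (∀ x ∈ I01, ∀ y ∈ I01, W x y = W y x) ∧
  ∃ C : ℝ, ∀ x ∈ I01, ∀ y ∈ I01, |W x y| ≤ C

/-- `W` belongs to `𝒲₀`: a graphon, i.e. symmetric measurable with values in `[0,1]`. -/
def memW0 (W : ℝ → ℝ → ℝ) : Prop :=
  Measurable (Function.uncurry W) ∧
  (∀ x ∈ I01, ∀ y ∈ I01, W x y = W y x) ∧
  ∀ x ∈ I01, ∀ y ∈ I01, W x y ∈ Set.Icc (0 : ℝ) 1

/-- Homomorphism density `t(F,W)` of a finite simple graph `F` in `W`. -/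
def homDensity {n : ℕ} (F : SimpleGraph (Fin n)) (W : ℝ → ℝ → ℝ) : ℝ :=
  ∫ x in cube n,
    ∏ p ∈ Finset.univ.filter (fun p : Fin n × Fin n => p.1 < p.2 ∧ F.Adj p.1 p.2),
      W (x p.1) (x p.2)

/-- Two kernels are weakly isomorphic if all their homomorphism densities agree. -/
def WeaklyIsomorphic (U W : ℝ → ℝ → ℝ) : Prop :=
  ∀ (n : ℕ) (F : SimpleGraph (Fin n)), homDensity F U = homDensity F W

/-- `W` is finitely forcible within the class `A`. -/
def FinitelyForcible (A : (ℝ → ℝ → ℝ) → Prop) (W : ℝ → ℝ → ℝ) : Prop :=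
  A W ∧ ∃ (k : ℕ) (n : Fin k → ℕ) (F : ∀ i, SimpleGraph (Fin (n i))),
    ∀ U, A U → (∀ i, homDensity (F i) U = homDensity (F i) W) → WeaklyIsomorphic U W

/-- Density function `t^k(F,W)` of a `k`-labeled graph, as a function of the
labeled variables; the graph has `k` labeled and `m` unlabeled vertices. -/
def labDensity {k m : ℕ} (F : SimpleGraph (Fin (k + m))) (W : ℝ → ℝ → ℝ)
    (x : Fin k → ℝ) : ℝ :=
  ∫ y in cube m,
    ∏ p ∈ Finset.univ.filter
        (fun p : Fin (k + m) × Fin (k + m) => p.1 < p.2 ∧ F.Adj p.1 p.2),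
      W (Fin.append x y p.1) (Fin.append x y p.2)

/-!
A density of a kernel `W(x, y) = ∑ gᵢ(x) hᵢ(y)` of finite rank is a polynomial in the integrals of
finitely many continuous functions against the underlying measure. By Tchakaloff's theorem these
integrals do not change when Lebesgue measure is replaced by a suitable finitely supported
probability measure `ν`. Write `ν` as the image of Lebesgue measure under `σ`; if `W` is finitely
forcible, then `W(σ(x), σ(y))` is weakly isomorphic to `W`, so that all densities agree for `ν` and
for Lebesgue measure.

The densities of the complete bipartite graphs `K_{2,k}` are the moments of the normalized
codegree `(x, y) ↦ ∫ W(x, z) W(y, z) dz`. Under `ν` the codegree takes finitely many values, hence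
so does the codegree under Lebesgue measure, and by continuity it is constant. All the rows
`W(x, ·)` then have the same norm and inner products, so they coincide, and `W` is constant by
symmetry.
-/

open Polynomial in
lemma integral_polynomial_eval {Z : Type*} [MeasurableSpace Z] {μ : Measure Z} {f : Z → ℝ}
    (hf : ∀ k : ℕ, Integrable (fun z => f z ^ k) μ) (P : ℝ[X]) :
    ∫ z, P.eval (f z) ∂μ = P.sum fun k a => a * ∫ z, f z ^ k ∂μ := by
  simp only [Polynomial.eval_eq_sum, Polynomial.sum_def]
  rw [integral_finsetSum _ fun k _ => (hf k).const_mul _]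
  simp only [integral_const_mul]

lemma integrable_of_continuous {Y : Type*} [TopologicalSpace Y] [CompactSpace Y]
    [MeasurableSpace Y] [OpensMeasurableSpace Y] {μ : Measure Y} [IsFiniteMeasureOnCompacts μ]
    {f : Y → ℝ} (hf : Continuous f) : Integrable f μ :=
  hf.integrable_of_hasCompactSupport (.of_compactSpace f)

lemma eq_zero_of_integral_eq_zero {Y : Type*} [TopologicalSpace Y] [CompactSpace Y]
    [MeasurableSpace Y] [OpensMeasurableSpace Y] {μ : Measure Y} [IsFiniteMeasureOnCompacts μ]
    [μ.IsOpenPosMeasure] {f : Y → ℝ} (hf : Continuous f) (hf_nonneg : 0 ≤ f)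
    (hf_integral : ∫ y, f y ∂μ = 0) : f = 0 :=
  (hf.ae_eq_iff_eq μ continuous_zero).1
    ((integral_eq_zero_iff_of_nonneg hf_nonneg (integrable_of_continuous hf)).1 hf_integral)

/-- A nonnegative polynomial vanishing exactly on `S` has integral `0` along `g`, hence along `f`,
so that `f` takes its values in `S`. -/
lemma range_subset_of_moments_eq {Y Z : Type*} [TopologicalSpace Y] [CompactSpace Y]
    [MeasurableSpace Y] [OpensMeasurableSpace Y] [MeasurableSpace Z]
    {μ : Measure Y} [IsFiniteMeasureOnCompacts μ] [μ.IsOpenPosMeasure] {ν : Measure Z}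
    {f : Y → ℝ} (hf : Continuous f) {g : Z → ℝ} (hg : ∀ k : ℕ, Integrable (fun z => g z ^ k) ν)
    {S : Set ℝ} (hS : S.Finite) (hgS : ∀ᵐ z ∂ν, g z ∈ S)
    (hfg : ∀ k : ℕ, ∫ y, f y ^ k ∂μ = ∫ z, g z ^ k ∂ν) : Set.range f ⊆ S := by
  let P : Polynomial ℝ := (∏ c ∈ hS.toFinset, (Polynomial.X - Polynomial.C c)) ^ 2
  have eval_P (t : ℝ) : P.eval t = (∏ c ∈ hS.toFinset, (t - c)) ^ 2 := by
    simp [P, Polynomial.eval_prod]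
  have eval_P_eq_zero (t : ℝ) : P.eval t = 0 ↔ t ∈ S := by
    simp [eval_P, Finset.prod_eq_zero_iff, sub_eq_zero]
  have integral_P_f : ∫ y, P.eval (f y) ∂μ = 0 := by
    have integral_P_g : ∫ z, P.eval (g z) ∂ν = 0 :=
      integral_eq_zero_of_ae (hgS.mono fun z hz => (eval_P_eq_zero _).2 hz)
    rw [← integral_P_g, integral_polynomial_eval hg,
      integral_polynomial_eval fun k => integrable_of_continuous (hf.pow k)]
    simp only [hfg]
  have P_f : (fun y => P.eval (f y)) = 0 :=
    eq_zero_of_integral_eq_zero (P.continuous.comp hf)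
      (fun y => (eval_P (f y)).symm ▸ sq_nonneg _) integral_P_f
  rintro _ ⟨y, rfl⟩
  exact (eval_P_eq_zero _).1 (congrFun P_f y)

lemma eq_of_moments_eq_of_finite {Y Z : Type*} [TopologicalSpace Y] [CompactSpace Y]
    [PreconnectedSpace Y] [MeasurableSpace Y] [OpensMeasurableSpace Y] [MeasurableSpace Z]
    {μ : Measure Y} [IsFiniteMeasureOnCompacts μ] [μ.IsOpenPosMeasure] {ν : Measure Z}
    {f : Y → ℝ} (hf : Continuous f) {g : Z → ℝ} (hg : ∀ k : ℕ, Integrable (fun z => g z ^ k) ν)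
    {S : Set ℝ} (hS : S.Finite) (hgS : ∀ᵐ z ∂ν, g z ∈ S)
    (hfg : ∀ k : ℕ, ∫ y, f y ^ k ∂μ = ∫ z, g z ^ k ∂ν) (y y' : Y) : f y = f y' := by
  have range_finite : (Set.range f).Finite :=
    hS.subset (range_subset_of_moments_eq hf hg hS hgS hfg)
  have range_subsingleton : (Set.range f).Subsingleton := by
    by_contra h
    exact (isPreconnected_range hf).infinite_of_nontrivial (Set.not_subsingleton_iff.1 h)
      range_finite
  exact range_subsingleton ⟨y, rfl⟩ ⟨y', rfl⟩

/-- By Carathéodory's theorem, convex combinations of at most `dim E + 1` points suffice. -/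
lemma isCompact_convexHull_of_isCompact {E : Type*} [NormedAddCommGroup E] [NormedSpace ℝ E]
    [FiniteDimensional ℝ E] {s : Set E} (hs : IsCompact s) : IsCompact (convexHull ℝ s) := by
  let combinations (n : ℕ) : Set E := (fun p : (Fin n → ℝ) × (Fin n → E) => ∑ i, p.1 i • p.2 i) ''
    (stdSimplex ℝ (Fin n) ×ˢ Set.univ.pi fun _ => s)
  have combinations_compact (n : ℕ) : IsCompact (combinations n) :=
    ((isCompact_stdSimplex ℝ (Fin n)).prod (isCompact_univ_pi fun _ => hs)).image (by fun_prop)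
  have hull_eq : convexHull ℝ s = ⋃ n ∈ Set.Iic (Module.finrank ℝ E + 1), combinations n := by
    refine Set.Subset.antisymm (fun x hx => ?_) (Set.iUnion₂_subset ?_)
    · obtain ⟨κ, _, z, w, hz, hind, hw, hw_sum, rfl⟩ := eq_pos_convex_span_of_mem_convexHull hx
      let e := (Fintype.equivFin κ).symm
      have card_le : Fintype.card κ ≤ Module.finrank ℝ E + 1 :=
        hind.card_le_finrank_succ.trans (Nat.succ_le_succ (Submodule.finrank_le _))
      refine Set.mem_biUnion card_le ⟨(w ∘ e, z ∘ e), ⟨⟨fun i => (hw _).le, ?_⟩, ?_⟩, ?_⟩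
      · exact (e.sum_comp w).trans hw_sum
      · exact fun i _ => hz ⟨_, rfl⟩
      · exact e.sum_comp fun i => w i • z i
    · rintro n - _ ⟨⟨w, z⟩, ⟨⟨hw, hw_sum⟩, hz⟩, rfl⟩
      exact mem_convexHull_of_exists_fintype w z hw hw_sum (fun i => hz i trivial) rfl
  rw [hull_eq]
  exact (Set.finite_Iic _).isCompact_biUnion fun n _ => combinations_compact n

lemma exists_finitelySupported_of_convexCombination {Y κ : Type*} [MeasurableSpace Y]
    [MeasurableSingletonClass Y] [Fintype κ] {w : κ → ℝ} (hw : ∀ i, 0 ≤ w i)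
    (hw_sum : ∑ i, w i = 1) (y : κ → Y) :
    ∃ ν : Measure Y, IsProbabilityMeasure ν ∧ (∃ S : Set Y, S.Finite ∧ ∀ᵐ x ∂ν, x ∈ S) ∧
      ∀ f : Y → ℝ, ∫ x, f x ∂ν = ∑ i, w i * f (y i) := by
  refine ⟨∑ i, ENNReal.ofReal (w i) • Measure.dirac (y i), ⟨?_⟩,
    ⟨Set.range y, Set.finite_range y, ?_⟩, fun f => ?_⟩
  · simp [← ENNReal.ofReal_sum_of_nonneg fun i _ => hw i, hw_sum]
  · rw [ae_iff]
    simp [Measure.dirac_apply]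
  · rw [integral_finsetSum_measure fun i _ =>
      (integrable_dirac (by simp)).smul_measure ENNReal.ofReal_ne_top]
    simp [integral_smul_measure, ENNReal.toReal_ofReal, hw]

/-- Tchakaloff's theorem: the vector of integrals is a barycenter of the compact image of `Y`
under the test functions, hence a convex combination of finitely many of its points. -/
theorem exists_finitelySupported_integral_eq {Y : Type*} [TopologicalSpace Y] [CompactSpace Y]
    [T1Space Y] [MeasurableSpace Y] [OpensMeasurableSpace Y] (μ : Measure Y)
    [IsProbabilityMeasure μ] {T : Set C(Y, ℝ)} (hT : T.Finite) :
    ∃ ν : Measure Y, IsProbabilityMeasure ν ∧ (∃ S : Set Y, S.Finite ∧ ∀ᵐ x ∂ν, x ∈ S) ∧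
      ∀ φ ∈ T, ∫ x, φ x ∂ν = ∫ x, φ x ∂μ := by
  have := hT.fintype
  let Φ : Y → T → ℝ := fun y φ => φ.1 y
  have Φ_continuous : Continuous Φ := continuous_pi fun φ => φ.1.continuous
  have Φ_integrable : Integrable Φ μ :=
    Φ_continuous.integrable_of_hasCompactSupport (.of_compactSpace Φ)
  have mem_hull : ∫ y, Φ y ∂μ ∈ convexHull ℝ (Set.range Φ) :=
    (convex_convexHull ℝ _).integral_mem
      (isCompact_convexHull_of_isCompact (isCompact_range Φ_continuous)).isClosed
      (.of_forall fun y => subset_convexHull ℝ _ ⟨y, rfl⟩) Φ_integrable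
  obtain ⟨κ, _, w, z, hw, hw_sum, hz, hwz⟩ := mem_convexHull_iff_exists_fintype.1 mem_hull
  choose y hy using hz
  obtain ⟨ν, hν, hνS, integral_ν⟩ := exists_finitelySupported_of_convexCombination hw hw_sum y
  refine ⟨ν, hν, hνS, fun φ hφ => ?_⟩
  calc ∫ x, φ x ∂ν = ∑ i, w i * Φ (y i) ⟨φ, hφ⟩ := integral_ν φ
    _ = (∫ x, Φ x ∂μ) ⟨φ, hφ⟩ := by simp [← hwz, hy]
    _ = ∫ x, φ x ∂μ := eval_integral (fun φ => Φ_integrable.eval φ) _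

/-- The edges of `F`, each listed once with its smaller endpoint first. -/
def orderedEdges {n : ℕ} (F : SimpleGraph (Fin n)) : Finset (Fin n × Fin n) :=
  Finset.univ.filter fun p => p.1 < p.2 ∧ F.Adj p.1 p.2

/-- The homomorphism density `t(F, W)` of a kernel `W` on the measure space `(Ω, μ)`. -/
def measureHomDensity {Ω : Type*} [MeasurableSpace Ω] {n : ℕ} (F : SimpleGraph (Fin n))
    (W : Ω → Ω → ℝ) (μ : Measure Ω) : ℝ :=
  ∫ x, ∏ p ∈ orderedEdges F, W (x p.1) (x p.2) ∂Measure.pi fun _ => μ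

lemma measureHomDensity_comp {Ω Ω' : Type*} [MeasurableSpace Ω] [MeasurableSpace Ω']
    {μ : Measure Ω} {ν : Measure Ω'} [SigmaFinite ν] {f : Ω → Ω'}
    (hf : MeasurePreserving f μ ν) {W : Ω' → Ω' → ℝ} (hW : Measurable (Function.uncurry W))
    {n : ℕ} (F : SimpleGraph (Fin n)) :
    measureHomDensity F (fun x y => W (f x) (f y)) μ = measureHomDensity F W ν := by
  have pi_preserving := measurePreserving_pi (fun _ : Fin n => μ) (fun _ => ν) fun _ => hf
  have integrand_measurable :
      Measurable fun x : Fin n → Ω' => ∏ p ∈ orderedEdges F, W (x p.1) (x p.2) :=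
    Finset.measurable_prod _ fun p _ =>
      hW.comp (f := fun x : Fin n → Ω' => (x p.1, x p.2))
        ((measurable_pi_apply p.1).prodMk (measurable_pi_apply p.2))
  rw [measureHomDensity, measureHomDensity, ← pi_preserving.map_eq,
    integral_map pi_preserving.measurable.aemeasurable integrand_measurable.aestronglyMeasurable]

lemma homDensity_eq_measureHomDensity_unitInterval {W : ℝ → ℝ → ℝ}
    (hW : Measurable (Function.uncurry W)) {n : ℕ} (F : SimpleGraph (Fin n)) :
    homDensity F W = measureHomDensity F (fun x y : unitInterval => W x y) volume := by
  rw [measureHomDensity_comp unitInterval.measurePreserving_coe hW, homDensity, cube, volume_pi,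
    Measure.restrict_pi_pi]
  rfl

/-- The kernel `(x, y) ↦ W (σ x) (σ y)`, with `σ : [0,1] → [0,1]` extended to `ℝ` by clamping its
argument to `[0,1]`. -/
def pullbackKernel (W : ℝ → ℝ → ℝ) (σ : unitInterval → unitInterval) (x y : ℝ) : ℝ :=
  W (σ (Set.projIcc 0 1 zero_le_one x)) (σ (Set.projIcc 0 1 zero_le_one y))

lemma measurable_pullbackKernel {W : ℝ → ℝ → ℝ} (hW : Measurable (Function.uncurry W))
    {σ : unitInterval → unitInterval} (hσ : Measurable σ) :
    Measurable (Function.uncurry (pullbackKernel W σ)) := by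
  have clamp_measurable :
      Measurable fun x : ℝ => (σ (Set.projIcc 0 1 zero_le_one x) : ℝ) :=
    measurable_subtype_coe.comp (hσ.comp continuous_projIcc.measurable)
  exact hW.comp ((clamp_measurable.comp measurable_fst).prodMk
    (clamp_measurable.comp measurable_snd))

lemma memW_pullbackKernel {W : ℝ → ℝ → ℝ} (hW : memW W) {σ : unitInterval → unitInterval}
    (hσ : Measurable σ) : memW (pullbackKernel W σ) := by
  obtain ⟨measurable, symmetric, C, bounded⟩ := hW
  exact ⟨measurable_pullbackKernel measurable hσ,
    fun x _ y _ => symmetric _ (Subtype.prop _) _ (Subtype.prop _),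
    C, fun x _ y _ => bounded _ (Subtype.prop _) _ (Subtype.prop _)⟩

lemma homDensity_pullbackKernel {W : ℝ → ℝ → ℝ} (hW : Measurable (Function.uncurry W))
    {σ : unitInterval → unitInterval} (hσ : Measurable σ) {n : ℕ} (F : SimpleGraph (Fin n)) :
    homDensity F (pullbackKernel W σ) =
      measureHomDensity F (fun x y : unitInterval => W x y) (volume.map σ) := by
  have := Measure.isProbabilityMeasure_map (μ := (volume : Measure unitInterval)) hσ.aemeasurable
  have restrict_measurable :
      Measurable (Function.uncurry fun x y : unitInterval => W x y) :=
    hW.comp (measurable_subtype_coe.prodMap measurable_subtype_coe)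
  rw [homDensity_eq_measureHomDensity_unitInterval (measurable_pullbackKernel hW hσ),
    ← measureHomDensity_comp (hσ.measurePreserving volume) restrict_measurable]
  simp only [pullbackKernel, Set.projIcc_val]

section FiniteRank

variable {X ι : Type*} [TopologicalSpace X] [Fintype ι]

/-- The continuous kernel of finite rank `(x, y) ↦ ∑ i, g i x * h i y`. -/
def finiteRankKernel (g h : ι → C(X, ℝ)) (x y : X) : ℝ := ∑ i, g i x * h i y

/-- The factor depending on the vertex `v` in the term of the expanded product
`∏ (a, b) ∈ E(F), ∑ i, g i (x a) * h i (x b)` that picks the summand `s e` at each edge `e`. -/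
def vertexFactor {n : ℕ} (F : SimpleGraph (Fin n)) (g h : ι → C(X, ℝ))
    (s : orderedEdges F → ι) (v : Fin n) : C(X, ℝ) :=
  (∏ e with e.1.1 = v, g (s e)) * ∏ e with e.1.2 = v, h (s e)

lemma prod_finiteRankKernel {n : ℕ} (F : SimpleGraph (Fin n)) (g h : ι → C(X, ℝ))
    (x : Fin n → X) :
    ∏ p ∈ orderedEdges F, finiteRankKernel g h (x p.1) (x p.2) =
      ∑ s : orderedEdges F → ι, ∏ v, vertexFactor F g h s v (x v) := by
  have regroup (s : orderedEdges F → ι) (k : ι → C(X, ℝ)) (endpoint : orderedEdges F → Fin n) :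
      ∏ e, k (s e) (x (endpoint e)) = ∏ v, ∏ e with endpoint e = v, k (s e) (x v) := by
    rw [← Finset.prod_fiberwise Finset.univ endpoint]
    exact Finset.prod_congr rfl fun v _ => Finset.prod_congr rfl fun e he => by
      rw [(Finset.mem_filter.1 he).2]
  rw [← Finset.prod_coe_sort]
  simp only [finiteRankKernel, Finset.prod_univ_sum, Fintype.piFinset_univ, vertexFactor,
    ContinuousMap.mul_apply, ContinuousMap.prod_apply, Finset.prod_mul_distrib]
  exact Finset.sum_congr rfl fun s _ => by
    rw [regroup s g fun e => e.1.1, regroup s h fun e => e.1.2]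

lemma continuous_finiteRankKernel (g h : ι → C(X, ℝ)) :
    Continuous (Function.uncurry (finiteRankKernel g h)) := by
  unfold finiteRankKernel
  fun_prop

variable [CompactSpace X] [SecondCountableTopology X] [MeasurableSpace X] [BorelSpace X]

lemma measureHomDensity_finiteRankKernel {n : ℕ} (F : SimpleGraph (Fin n)) (g h : ι → C(X, ℝ))
    (μ : Measure X) [IsFiniteMeasure μ] :
    measureHomDensity F (finiteRankKernel g h) μ =
      ∑ s : orderedEdges F → ι, ∏ v, ∫ x, vertexFactor F g h s v x ∂μ := by
  simp only [measureHomDensity, prod_finiteRankKernel]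
  rw [integral_finsetSum _ fun s _ => integrable_of_continuous (by fun_prop)]
  simp only [integral_fintype_prod_eq_prod fun v => ⇑(vertexFactor F g h _ v)]

lemma exists_finite_forall_measureHomDensity_eq {n : ℕ} (F : SimpleGraph (Fin n))
    (g h : ι → C(X, ℝ)) :
    ∃ T : Set C(X, ℝ), T.Finite ∧ ∀ (μ ν : Measure X) [IsFiniteMeasure μ] [IsFiniteMeasure ν],
      (∀ φ ∈ T, ∫ x, φ x ∂μ = ∫ x, φ x ∂ν) →
        measureHomDensity F (finiteRankKernel g h) μ =
          measureHomDensity F (finiteRankKernel g h) ν := by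
  refine ⟨Set.range fun p : (orderedEdges F → ι) × Fin n => vertexFactor F g h p.1 p.2,
    Set.finite_range _, fun μ ν _ _ hμν => ?_⟩
  simp only [measureHomDensity_finiteRankKernel]
  exact Finset.sum_congr rfl fun s _ => Finset.prod_congr rfl fun v _ => hμν _ ⟨(s, v), rfl⟩

end FiniteRank

/-- The complete bipartite graph `K_{m,k}` on `Fin (m + k)`, whose first side is the first `m`
vertices. -/
def completeBipartiteFin (m k : ℕ) : SimpleGraph (Fin (m + k)) :=
  (completeBipartiteGraph (Fin m) (Fin k)).comap finSumFinEquiv.symm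

lemma prod_orderedEdges_completeBipartiteFin {M : Type*} [CommMonoid M] (m k : ℕ)
    (f : Fin (m + k) → Fin (m + k) → M) :
    ∏ p ∈ orderedEdges (completeBipartiteFin m k), f p.1 p.2 =
      ∏ j, ∏ i, f (Fin.castAdd k i) (Fin.natAdd m j) := by
  have edges_eq : orderedEdges (completeBipartiteFin m k) = Finset.univ.map
      ((Fin.castAddEmb k).prodMap (Fin.natAddEmb m)) := by
    have castAdd_lt_natAdd (i : Fin m) (j : Fin k) : Fin.castAdd k i < Fin.natAdd m j :=
      i.2.trans_le (Nat.le_add_right m j)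
    ext ⟨a, b⟩
    induction a using Fin.addCases <;> induction b using Fin.addCases <;>
      simp [orderedEdges, completeBipartiteFin, castAdd_lt_natAdd, (castAdd_lt_natAdd _ _).ne,
        (castAdd_lt_natAdd _ _).ne', (castAdd_lt_natAdd _ _).not_gt]
  rw [edges_eq, Finset.prod_map, Fintype.prod_prod_type_right]
  rfl

lemma measurePreserving_finAppend {X : Type*} [MeasurableSpace X] (μ : Measure X) [SigmaFinite μ]
    (m k : ℕ) :
    MeasurePreserving (fun p : (Fin m → X) × (Fin k → X) => Fin.append p.1 p.2)
      ((Measure.pi fun _ => μ).prod (Measure.pi fun _ => μ)) (Measure.pi fun _ => μ) := by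
  convert (measurePreserving_piCongrLeft (fun _ : Fin (m + k) => μ) finSumFinEquiv).comp
    (measurePreserving_sumPiEquivProdPi_symm fun _ : Fin m ⊕ Fin k => μ) using 1
  ext p v
  induction v using Fin.addCases with
  | left i =>
    rw [Fin.append_left]
    exact (Equiv.piCongrLeft_sumInl (fun _ => X) finSumFinEquiv p.1 p.2 i).symm
  | right j =>
    rw [Fin.append_right]
    exact (Equiv.piCongrLeft_sumInr (fun _ => X) finSumFinEquiv p.1 p.2 j).symm

lemma integral_pi_finAppend {X E : Type*} [MeasurableSpace X] [NormedAddCommGroup E]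
    [NormedSpace ℝ E] {μ : Measure X} [SigmaFinite μ] {m k : ℕ} {f : (Fin (m + k) → X) → E}
    (hf : Integrable f (Measure.pi fun _ => μ)) :
    ∫ x, f x ∂(Measure.pi fun _ => μ) =
      ∫ x, ∫ y, f (Fin.append x y) ∂(Measure.pi fun _ => μ) ∂(Measure.pi fun _ => μ) := by
  have append_preserving := measurePreserving_finAppend μ m k
  rw [← append_preserving.map_eq] at hf ⊢
  rw [integral_map append_preserving.aemeasurable hf.aestronglyMeasurable]
  exact integral_prod _ (hf.comp_measurable append_preserving.measurable)

section CommonDegree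

/-- The normalized number of common neighbors of the points `x i` in the kernel `W`. -/
def commonDegree {X κ : Type*} [MeasurableSpace X] [Fintype κ] (W : X → X → ℝ) (μ : Measure X)
    (x : κ → X) : ℝ :=
  ∫ z, ∏ i, W (x i) z ∂μ

variable {X : Type*} [TopologicalSpace X] [CompactSpace X] [MeasurableSpace X] [BorelSpace X]
  {μ : Measure X} [IsFiniteMeasure μ] {W : X → X → ℝ}

/-- Expand `∫ z, (W a z - W b z) ^ 2 = 0`. -/
lemma eq_of_commonDegree_eq [μ.IsOpenPosMeasure] (hW : Continuous (Function.uncurry W))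
    (h : ∀ x y : Fin 2 → X, commonDegree W μ x = commonDegree W μ y) (a b z : X) :
    W a z = W b z := by
  have integrable_mul (x y : X) : Integrable (fun z => W x z * W y z) μ :=
    integrable_of_continuous (by fun_prop)
  have integrable_mul_sub (x : X) : Integrable (fun z => W x z * W a z - W x z * W b z) μ :=
    (integrable_mul x a).sub (integrable_mul x b)
  have integral_mul_eq (x y : X) : ∫ z, W x z * W y z ∂μ = commonDegree W μ ![a, a] := by
    simpa [commonDegree] using h ![x, y] ![a, a]
  have integral_sq_eq_zero : ∫ z, (W a z - W b z) ^ 2 ∂μ = 0 := by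
    calc ∫ z, (W a z - W b z) ^ 2 ∂μ
        = ∫ z, (W a z * W a z - W a z * W b z) - (W b z * W a z - W b z * W b z) ∂μ := by
          congr 1 with z
          ring
      _ = 0 := by
          rw [integral_sub (integrable_mul_sub a) (integrable_mul_sub b),
            integral_sub (integrable_mul a a) (integrable_mul a b),
            integral_sub (integrable_mul b a) (integrable_mul b b)]
          simp only [integral_mul_eq, sub_self]
  have sq_eq_zero := congrFun (eq_zero_of_integral_eq_zero (by fun_prop)
    (fun z => sq_nonneg (W a z - W b z)) integral_sq_eq_zero) z
  exact sub_eq_zero.1 (pow_eq_zero_iff two_ne_zero |>.1 sq_eq_zero)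

variable [SecondCountableTopology X]

lemma measureHomDensity_completeBipartiteFin (hW : Continuous (Function.uncurry W)) (m k : ℕ) :
    measureHomDensity (completeBipartiteFin m k) W μ =
      ∫ x : Fin m → X, commonDegree W μ x ^ k ∂Measure.pi fun _ => μ := by
  have integrand_eq (x : Fin (m + k) → X) :=
    prod_orderedEdges_completeBipartiteFin m k fun a b => W (x a) (x b)
  simp only [measureHomDensity, integrand_eq]
  rw [integral_pi_finAppend (integrable_of_continuous (by fun_prop))]
  congr 1 with x
  simpa [commonDegree] using
    integral_fintype_prod_eq_pow (ι := Fin k) (μ := μ) fun z => ∏ i, W (x i) z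

variable [T2Space X]

lemma continuous_commonDegree {κ : Type*} [Fintype κ] (hW : Continuous (Function.uncurry W)) :
    Continuous (commonDegree W μ : (κ → X) → ℝ) := by
  have integrand_continuous :
      Continuous (Function.uncurry fun (x : κ → X) z => ∏ i, W (x i) z) := by
    fun_prop
  change Continuous fun x : κ → X => ∫ z, ∏ i, W (x i) z ∂μ
  simpa only [Measure.restrict_univ] using
    continuous_parametric_integral_of_continuous (μ := μ) integrand_continuous isCompact_univ

lemma eq_of_measureHomDensity_completeBipartiteFin_eq [PreconnectedSpace X] [μ.IsOpenPosMeasure]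
    (hW : Continuous (Function.uncurry W)) {ν : Measure X} [IsFiniteMeasure ν] {S : Set X}
    (hS : S.Finite) (hνS : ∀ᵐ x ∂ν, x ∈ S)
    (h : ∀ k, measureHomDensity (completeBipartiteFin 2 k) W ν =
      measureHomDensity (completeBipartiteFin 2 k) W μ) (a b z : X) : W a z = W b z := by
  have ae_mem : ∀ᵐ x : Fin 2 → X ∂Measure.pi fun _ => ν,
      commonDegree W ν x ∈ commonDegree W ν '' Set.univ.pi fun _ : Fin 2 => S := by
    have coordinates_mem : ∀ᵐ x : Fin 2 → X ∂Measure.pi fun _ => ν, ∀ i, x i ∈ S :=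
      ae_all_iff.2 fun i => Measure.tendsto_eval_ae_ae.eventually hνS
    exact coordinates_mem.mono fun x hx => ⟨x, fun i _ => hx i, rfl⟩
  refine eq_of_commonDegree_eq (μ := μ) hW (fun x y => ?_) a b z
  refine eq_of_moments_eq_of_finite (μ := Measure.pi fun _ : Fin 2 => μ)
    (continuous_commonDegree hW)
    (fun k => integrable_of_continuous ((continuous_commonDegree hW).pow k))
    ((Set.Finite.pi fun _ : Fin 2 => hS).image _) ae_mem (fun k => ?_) x y
  rw [← measureHomDensity_completeBipartiteFin hW, ← measureHomDensity_completeBipartiteFin hW, h]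

end CommonDegree

instance isOpenPosMeasure_volume_unitInterval :
    (volume : Measure unitInterval).IsOpenPosMeasure where
  open_pos U hU hU_nonempty := by
    obtain ⟨a, b, hab, hU_Ioo⟩ := hU.exists_Ioo_subset hU_nonempty
    have Ioo_pos : 0 < volume (Set.Ioo a b) := by
      rw [unitInterval.volume_Ioo]
      exact ENNReal.ofReal_pos.2 (sub_pos.2 hab)
    exact (Ioo_pos.trans_le (measure_mono hU_Ioo)).ne'

theorem statement19_general {ι : Type*} [Fintype ι] (g h : ι → C(unitInterval, ℝ))
    {W : ℝ → ℝ → ℝ} (hW : ∀ x y : unitInterval, W x y = finiteRankKernel g h x y)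
    (hnc : ¬ ∃ c : ℝ, ∀ x ∈ I01, ∀ y ∈ I01, W x y = c) : ¬ FinitelyForcible memW W := by
  rintro ⟨W_mem, N, n, F, forces⟩
  have restrict_eq : (fun x y : unitInterval => W x y) = finiteRankKernel g h :=
    funext₂ hW
  choose T T_finite density_eq using fun i => exists_finite_forall_measureHomDensity_eq (F i) g h
  obtain ⟨ν, _, ⟨S, S_finite, ν_mem_S⟩, integral_ν⟩ := exists_finitelySupported_integral_eq
    (volume : Measure unitInterval) (Set.finite_iUnion T_finite)
  obtain ⟨σ, σ_measurable, rfl⟩ := ν.exists_measurable_map_eq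
  have weakly_isomorphic : WeaklyIsomorphic (pullbackKernel W σ) W := by
    refine forces _ (memW_pullbackKernel W_mem σ_measurable) fun i => ?_
    rw [homDensity_pullbackKernel W_mem.1 σ_measurable,
      homDensity_eq_measureHomDensity_unitInterval W_mem.1, restrict_eq]
    exact density_eq i _ _ fun φ hφ => integral_ν φ (Set.mem_iUnion_of_mem i hφ)
  have row_eq (a b z : unitInterval) : W a z = W b z := by
    have := eq_of_measureHomDensity_completeBipartiteFin_eq (μ := volume)
      (W := finiteRankKernel g h) (continuous_finiteRankKernel g h) S_finite ν_mem_S fun k => by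
        rw [← restrict_eq, ← homDensity_pullbackKernel W_mem.1 σ_measurable,
          ← homDensity_eq_measureHomDensity_unitInterval W_mem.1, weakly_isomorphic]
    rw [hW, hW, this a b z]
  refine hnc ⟨W 0 0, fun x hx y hy => ?_⟩
  have zero_mem : (0 : ℝ) ∈ I01 := ⟨le_rfl, zero_le_one⟩
  calc W x y = W 0 y := row_eq ⟨x, hx⟩ 0 ⟨y, hy⟩
    _ = W y 0 := W_mem.2.1 _ zero_mem _ hy
    _ = W 0 0 := row_eq ⟨y, hy⟩ 0 0

lemma exists_finiteRankKernel_eq_eval (q : MvPolynomial (Fin 2) ℝ) :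
    ∃ g h : q.support → C(unitInterval, ℝ), ∀ x y : unitInterval,
      MvPolynomial.eval ![(x : ℝ), (y : ℝ)] q = finiteRankKernel g h x y := by
  refine ⟨fun d => ⟨fun x => q.coeff d * (x : ℝ) ^ d.1 0, by fun_prop⟩,
    fun d => ⟨fun y => (y : ℝ) ^ d.1 1, by fun_prop⟩, fun x y => ?_⟩
  rw [MvPolynomial.eval_eq', ← Finset.sum_coe_sort]
  simp [finiteRankKernel, Fin.prod_univ_two, mul_assoc]

lemma eval_eq_of_forall_mem_I01 {q : MvPolynomial (Fin 2) ℝ} {c : ℝ}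
    (hq : ∀ x ∈ I01, ∀ y ∈ I01, MvPolynomial.eval ![x, y] q = c) (x y : ℝ) :
    MvPolynomial.eval ![x, y] q = c := by
  have q_eq : q = MvPolynomial.C c := by
    refine MvPolynomial.funext_set (fun _ => I01) (fun _ => Set.Icc_infinite zero_lt_one)
      fun v hv => ?_
    rw [MvPolynomial.eval_C, ← hq (v 0) (hv 0 trivial) (v 1) (hv 1 trivial)]
    congr 2
    ext i
    fin_cases i <;> rfl
  rw [q_eq, MvPolynomial.eval_C]

/-- a graphon given by a non-constant symmetric two-variable real
polynomial with values in `[0,1]` on `[0,1]²` is not finitely forcible in `𝒲`. -/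
theorem statement19 (q : MvPolynomial (Fin 2) ℝ)
    (hsym : ∀ x y : ℝ, MvPolynomial.eval ![x, y] q = MvPolynomial.eval ![y, x] q)
    (hnc : ¬ ∃ c : ℝ, ∀ x y : ℝ, MvPolynomial.eval ![x, y] q = c)
    (hrange : ∀ x ∈ I01, ∀ y ∈ I01, MvPolynomial.eval ![x, y] q ∈ Set.Icc (0 : ℝ) 1) :
    ¬ FinitelyForcible memW (fun x y => MvPolynomial.eval ![x, y] q) := by
  obtain ⟨g, h, eval_eq⟩ := exists_finiteRankKernel_eq_eval q
  exact statement19_general g h eval_eq fun ⟨c, hc⟩ => hnc ⟨c, eval_eq_of_forall_mem_I01 hc⟩
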